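/- Let n ≥ 2, R > 0, and let B_R(0) be the open ball of radius R centered at the origin in ℝⁿ. If u is a nonzero function, smooth on the closure of B_R(0), satisfying Δu = −μ₁(B_R(0))·u in B_R(0) and ∂u/∂n = 0 on ∂B_R(0) (i.e., u is a first nonzero Neumann eigenfunction of the Laplacian on the ball), then u satisfies Δ²u = Υ₁(B_R(0))·u in B_R(0) together with ∂u/∂n = ∂(Δu)/∂n = 0 on ∂B_R(0); that is, u is a Neumann eigenfunction of the bi-harmonic operator Δ² corresponding to its first nonzero Neumann eigenvalue Υ₁(B_R(0)). -/

import Mathlib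

open MeasureTheory Set Metric

noncomputable section

/-- The Laplacian of `f` (sum of second partial derivatives), with all derivatives
taken within the set `S`. -/
def lapWithin {n : ℕ} (S : Set (EuclideanSpace ℝ (Fin n)))
    (f : EuclideanSpace ℝ (Fin n) → ℝ) (x : EuclideanSpace ℝ (Fin n)) : ℝ :=
  ∑ i : Fin n, fderivWithin ℝ
    (fun y => fderivWithin ℝ f S y (EuclideanSpace.single i 1)) S x (EuclideanSpace.single i 1)

/-- `μ` is a Neumann eigenvalue of the Laplacian on the ball `B_R(0) ⊂ ℝⁿ`: there is a nonzero
function `u`, smooth on the closed ball, with `Δu = −μ·u` in the open ball and vanishing outward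
normal (i.e. radial) derivative on the boundary sphere. -/
def IsLapNeumannEigenvalueBall (n : ℕ) (R μ : ℝ) : Prop :=
  ∃ u : EuclideanSpace ℝ (Fin n) → ℝ,
    ContDiffOn ℝ (⊤ : ℕ∞) u (closedBall 0 R) ∧
    (∃ x ∈ closedBall (0 : EuclideanSpace ℝ (Fin n)) R, u x ≠ 0) ∧
    (∀ x ∈ ball (0 : EuclideanSpace ℝ (Fin n)) R,
      lapWithin (closedBall 0 R) u x = -μ * u x) ∧
    (∀ x : EuclideanSpace ℝ (Fin n), ‖x‖ = R →
      fderivWithin ℝ u (closedBall 0 R) x (‖x‖⁻¹ • x) = 0)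

/-- `Υ` is a Neumann eigenvalue of the bi-harmonic operator `Δ²` on the ball `B_R(0) ⊂ ℝⁿ`:
there is a nonzero function `u`, smooth on the closed ball, with `Δ²u = Υ·u` in the open ball and
`∂u/∂n = ∂(Δu)/∂n = 0` on the boundary sphere. -/
def IsBiLapNeumannEigenvalueBall (n : ℕ) (R Υ : ℝ) : Prop :=
  ∃ u : EuclideanSpace ℝ (Fin n) → ℝ,
    ContDiffOn ℝ (⊤ : ℕ∞) u (closedBall 0 R) ∧
    (∃ x ∈ closedBall (0 : EuclideanSpace ℝ (Fin n)) R, u x ≠ 0) ∧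
    (∀ x ∈ ball (0 : EuclideanSpace ℝ (Fin n)) R,
      lapWithin (closedBall 0 R) (lapWithin (closedBall 0 R) u) x = Υ * u x) ∧
    (∀ x : EuclideanSpace ℝ (Fin n), ‖x‖ = R →
      fderivWithin ℝ u (closedBall 0 R) x (‖x‖⁻¹ • x) = 0) ∧
    (∀ x : EuclideanSpace ℝ (Fin n), ‖x‖ = R →
      fderivWithin ℝ (lapWithin (closedBall 0 R) u) (closedBall 0 R) x (‖x‖⁻¹ • x) = 0)

/-- `Υ` is a Neumann eigenvalue of the even-multi-Laplacian `Δ^(2m)` on the ball `B_R(0) ⊂ ℝⁿ`: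
there is a nonzero function `u`, smooth on the closed ball, with `Δ^(2m)u = Υ·u` in the open ball
and `∂(Δʲu)/∂n = 0` on the boundary sphere for every `j = 0, 1, …, 2m−1`. -/
def IsPolyLapNeumannEigenvalueBall (n m : ℕ) (R Υ : ℝ) : Prop :=
  ∃ u : EuclideanSpace ℝ (Fin n) → ℝ,
    ContDiffOn ℝ (⊤ : ℕ∞) u (closedBall 0 R) ∧
    (∃ x ∈ closedBall (0 : EuclideanSpace ℝ (Fin n)) R, u x ≠ 0) ∧
    (∀ x ∈ ball (0 : EuclideanSpace ℝ (Fin n)) R,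
      (lapWithin (closedBall 0 R))^[2 * m] u x = Υ * u x) ∧
    (∀ j < 2 * m, ∀ x : EuclideanSpace ℝ (Fin n), ‖x‖ = R →
      fderivWithin ℝ ((lapWithin (closedBall 0 R))^[j] u) (closedBall 0 R) x (‖x‖⁻¹ • x) = 0)

section Helpers

variable {n : ℕ}

local notation "E" => EuclideanSpace ℝ (Fin n)

lemma aux_unique {R : ℝ} (hR : 0 < R) : UniqueDiffOn ℝ (closedBall (0 : E) R) := by
  apply uniqueDiffOn_convex (convex_closedBall _ _)
  rw [interior_closedBall _ hR.ne']
  exact ⟨0, by simpa using hR⟩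

lemma aux_pd_smooth {S : Set E} (hS : UniqueDiffOn ℝ S) {f : E → ℝ}
    (hf : ContDiffOn ℝ (⊤ : ℕ∞) f S) (e : E) :
    ContDiffOn ℝ (⊤ : ℕ∞) (fun y => fderivWithin ℝ f S y e) S := by
  have h : ContDiffOn ℝ (⊤ : ℕ∞) (fderivWithin ℝ f S) S :=
    hf.fderivWithin hS (by simp)
  exact h.clm_apply contDiffOn_const

lemma aux_lap_smooth {S : Set E} (hS : UniqueDiffOn ℝ S) {f : E → ℝ}
    (hf : ContDiffOn ℝ (⊤ : ℕ∞) f S) : ContDiffOn ℝ (⊤ : ℕ∞) (lapWithin S f) S := by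
  unfold lapWithin
  exact ContDiffOn.sum fun i _ => aux_pd_smooth hS (aux_pd_smooth hS hf _) _

lemma aux_diff {S : Set E} {f : E → ℝ} (hf : ContDiffOn ℝ (⊤ : ℕ∞) f S) :
    DifferentiableOn ℝ f S := hf.differentiableOn (by simp)

lemma aux_lap_congr {S : Set E} {f g : E → ℝ} (h : EqOn f g S) :
    EqOn (lapWithin S f) (lapWithin S g) S := by
  intro x hx
  unfold lapWithin
  refine Finset.sum_congr rfl fun i _ => ?_
  rw [fderivWithin_congr (f₁ := fun y => fderivWithin ℝ f S y (EuclideanSpace.single i 1))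
    (f := fun y => fderivWithin ℝ g S y (EuclideanSpace.single i 1)) ?_ ?_]
  · intro y hy
    simp only [fderivWithin_congr h (h hy)]
  · simp only [fderivWithin_congr h (h hx)]

lemma aux_fd_lin {S : Set E} (hS : UniqueDiffOn ℝ S) {f g : E → ℝ}
    (hf : DifferentiableOn ℝ f S) (hg : DifferentiableOn ℝ g S)
    (a b : ℝ) {x : E} (hx : x ∈ S) (e : E) :
    fderivWithin ℝ (fun y => a * f y + b * g y) S x e
      = a * fderivWithin ℝ f S x e + b * fderivWithin ℝ g S x e := by
  have h := (((hf x hx).hasFDerivWithinAt.const_mul a).add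
    ((hg x hx).hasFDerivWithinAt.const_mul b)).fderivWithin (hS x hx)
  have h' := congrArg (fun L : E →L[ℝ] ℝ => L e) h
  simp only [ContinuousLinearMap.add_apply, ContinuousLinearMap.smul_apply, smul_eq_mul] at h'
  exact h'

lemma aux_lap_lin {S : Set E} (hS : UniqueDiffOn ℝ S) {f g : E → ℝ}
    (hf : ContDiffOn ℝ (⊤ : ℕ∞) f S) (hg : ContDiffOn ℝ (⊤ : ℕ∞) g S)
    (a b : ℝ) {x : E} (hx : x ∈ S) :
    lapWithin S (fun y => a * f y + b * g y) x = a * lapWithin S f x + b * lapWithin S g x := by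
  unfold lapWithin
  rw [Finset.mul_sum, Finset.mul_sum, ← Finset.sum_add_distrib]
  refine Finset.sum_congr rfl fun i _ => ?_
  rw [← aux_fd_lin hS (aux_diff (aux_pd_smooth hS hf _)) (aux_diff (aux_pd_smooth hS hg _)) a b hx]
  have key : EqOn
      (fun y => fderivWithin ℝ (fun y => a * f y + b * g y) S y (EuclideanSpace.single i 1))
      (fun y => a * fderivWithin ℝ f S y (EuclideanSpace.single i 1)
        + b * fderivWithin ℝ g S y (EuclideanSpace.single i 1)) S :=
    fun y hy => aux_fd_lin hS (aux_diff hf) (aux_diff hg) a b hy _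
  rw [fderivWithin_congr key (key hx)]

lemma aux_extend {R : ℝ} (hR : 0 < R) {f g : E → ℝ}
    (hf : ContinuousOn f (closedBall 0 R)) (hg : ContinuousOn g (closedBall 0 R))
    (h : ∀ x ∈ ball (0 : E) R, f x = g x) : EqOn f g (closedBall 0 R) := by
  have hc := closure_ball (0 : E) hR.ne'
  exact EqOn.of_subset_closure h hf hg ball_subset_closedBall hc.ge

lemma aux_inward {R : ℝ} {x v : E} (hx : ‖x‖ ≤ R) (hv : ‖x‖ < R ∨ inner ℝ x v < 0) :
    ∃ ε > 0, ∀ t ∈ Icc (0 : ℝ) ε, x + t • v ∈ closedBall (0 : E) R := by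
  have hR : 0 ≤ R := (norm_nonneg x).trans hx
  rcases hv with hv | hv
  · refine ⟨(R - ‖x‖) / (‖v‖ + 1), by have := norm_nonneg v; apply div_pos <;> linarith, ?_⟩
    rintro t ⟨h0, h1⟩
    rw [mem_closedBall_zero_iff]
    rw [le_div_iff₀ (by positivity)] at h1
    calc ‖x + t • v‖ ≤ ‖x‖ + ‖t • v‖ := norm_add_le _ _
      _ = ‖x‖ + t * ‖v‖ := by rw [norm_smul, Real.norm_of_nonneg h0]
      _ ≤ R := by nlinarith [norm_nonneg v]
  · refine ⟨(-inner ℝ x v) / (‖v‖ ^ 2 + 1), by apply div_pos; linarith; positivity, ?_⟩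
    rintro t ⟨h0, h1⟩
    rw [mem_closedBall_zero_iff]
    rw [le_div_iff₀ (by positivity)] at h1
    apply le_of_sq_le_sq _ hR
    rw [norm_add_sq_real, norm_smul, Real.norm_of_nonneg h0, inner_smul_right]
    have h2 : t * (t * (‖v‖ ^ 2 + 1)) ≤ t * (-inner ℝ x v) := mul_le_mul_of_nonneg_left h1 h0
    have h3 : ‖x‖ ^ 2 ≤ R ^ 2 := pow_le_pow_left₀ (norm_nonneg x) hx 2
    nlinarith [mul_nonneg h0 (neg_nonneg.mpr hv.le), mul_nonneg h0 h0]

/-- One-variable first and second order conditions at a left-endpoint maximum. -/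
lemma aux_first {g : ℝ → ℝ} {d ε : ℝ} (hε : 0 < ε)
    (hg : HasDerivWithinAt g d (Icc 0 ε) 0) (hmax : ∀ t ∈ Icc 0 ε, g t ≤ g 0) : d ≤ 0 := by
  have h := (hasDerivWithinAt_iff_tendsto_slope' (s := Ioc 0 ε) (x := (0 : ℝ)) (by simp)).1
    (hg.mono Ioc_subset_Icc_self)
  have : (nhdsWithin (0 : ℝ) (Ioc 0 ε)).NeBot := by
    rw [nhdsWithin_Ioc_eq_nhdsGT hε]; infer_instance
  refine le_of_tendsto h ?_
  filter_upwards [self_mem_nhdsWithin] with t ht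
  rw [slope_def_field]
  apply div_nonpos_of_nonpos_of_nonneg
  · linarith [hmax t ⟨ht.1.le, ht.2⟩]
  · linarith [ht.1]

lemma aux_second {g g' : ℝ → ℝ} {d ε : ℝ} (hε : 0 < ε)
    (hg : ∀ t ∈ Icc 0 ε, HasDerivWithinAt g (g' t) (Icc 0 ε) t)
    (hg' : HasDerivWithinAt g' d (Icc 0 ε) 0) (h0 : g' 0 = 0)
    (hmax : ∀ t ∈ Icc 0 ε, g t ≤ g 0) : d ≤ 0 := by
  have h := (hasDerivWithinAt_iff_tendsto_slope' (s := Ioc 0 ε) (x := (0 : ℝ)) (by simp)).1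
    (hg'.mono Ioc_subset_Icc_self)
  by_contra hd
  push Not at hd
  have h2 := h.eventually (lt_mem_nhds hd)
  rw [nhdsWithin_Ioc_eq_nhdsGT hε] at h2
  obtain ⟨δ, hδ, hδs⟩ := (mem_nhdsGT_iff_exists_Ioo_subset).1 h2
  have hδ : 0 < δ := hδ
  set m := min δ ε with hm
  have hm0 : 0 < m := lt_min hδ hε
  obtain ⟨c, hc, hce⟩ := exists_hasDerivAt_eq_slope g g' hm0
    (fun t ht => ((hg t ⟨ht.1, ht.2.trans (min_le_right _ _)⟩).continuousWithinAt).mono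
      (Icc_subset_Icc_right (min_le_right _ _)))
    (fun t ht => (hg t ⟨ht.1.le, ht.2.le.trans (min_le_right _ _)⟩).hasDerivAt
      (Icc_mem_nhds ht.1 (ht.2.trans_le (min_le_right _ _))))
  have h3 : 0 < slope g' 0 c := hδs ⟨hc.1, hc.2.trans_le (min_le_left _ _)⟩
  rw [slope_def_field, h0, sub_zero, sub_zero] at h3
  have h4 : 0 < g' c := by
    have := mul_pos h3 hc.1
    rwa [div_mul_cancel₀ _ hc.1.ne'] at this
  have h5 := hmax m ⟨hm0.le, min_le_right _ _⟩
  rw [hce] at h4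
  have : (g m - g 0) / (m - 0) ≤ 0 :=
    div_nonpos_of_nonpos_of_nonneg (by linarith) (by linarith)
  linarith

lemma aux_line {S : Set E} {f : E → ℝ} {x v : E} {ε t : ℝ} {L : E →L[ℝ] ℝ}
    (hS : ∀ t ∈ Icc (0 : ℝ) ε, x + t • v ∈ S)
    (hf : HasFDerivWithinAt f L S (x + t • v)) :
    HasDerivWithinAt (fun t : ℝ => f (x + t • v)) (L v) (Icc 0 ε) t := by
  have h1 : HasDerivWithinAt (fun t : ℝ => x + t • v) v (Icc 0 ε) t := by
    simpa using (((hasDerivAt_id t).smul_const v).const_add x).hasDerivWithinAt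
  exact hf.comp_hasDerivWithinAt t h1 hS

/-- At a maximum point on the closed ball with vanishing normal derivative the Laplacian is
nonpositive. -/
lemma aux_lap_nonpos {R : ℝ} (hR : 0 < R) {f : E → ℝ}
    (hf : ContDiffOn ℝ (⊤ : ℕ∞) f (closedBall 0 R))
    (hbd : ∀ x : E, ‖x‖ = R → fderivWithin ℝ f (closedBall 0 R) x (‖x‖⁻¹ • x) = 0)
    {x : E} (hx : x ∈ closedBall (0 : E) R) (hmax : ∀ y ∈ closedBall (0 : E) R, f y ≤ f x) :
    lapWithin (closedBall 0 R) f x ≤ 0 := by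
  set S := closedBall (0 : E) R with hSdef
  have hS : UniqueDiffOn ℝ S := aux_unique hR
  have hxR : ‖x‖ ≤ R := by simpa [S] using hx
  have hd := aux_diff hf
  have hD : ∀ y ∈ S, HasFDerivWithinAt f (fderivWithin ℝ f S y) S y :=
    fun y hy => (hd y hy).hasFDerivWithinAt
  have hDsm : ContDiffOn ℝ (⊤ : ℕ∞) (fderivWithin ℝ f S) S := hf.fderivWithin hS (by simp)
  have hDD := (hDsm.differentiableOn (by simp) x hx).hasFDerivWithinAt
  set L := fderivWithin ℝ (fderivWithin ℝ f S) S x with hL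
  have hHess : ∀ v, HasFDerivWithinAt (fun y => fderivWithin ℝ f S y v) (L.flip v) S x := by
    intro v
    have := hDD.clm_apply (hasFDerivWithinAt_const v x S)
    have hE : (fderivWithin ℝ f S x).comp (0 : E →L[ℝ] E) + L.flip v = L.flip v := by
      ext w; simp
    rw [← hE]
    exact this
  -- first order condition
  have h1 : ∀ v : E, (‖x‖ < R ∨ inner ℝ x v < 0) → fderivWithin ℝ f S x v ≤ 0 := by
    intro v hv
    obtain ⟨ε, hε, hin⟩ := aux_inward hxR hv
    have := aux_line (t := 0) hin (by simpa using hD x hx)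
    refine aux_first hε this fun t ht => ?_
    simpa using hmax _ (hin t ht)
  have h2 : ∀ v : E, fderivWithin ℝ f S x v ≤ 0 := by
    intro v
    rcases hxR.lt_or_eq with hlt | heq
    · exact h1 v (Or.inl hlt)
    · have hz : fderivWithin ℝ f S x x = 0 := by
        have := hbd x heq
        rw [map_smul, smul_eq_mul] at this
        rcases mul_eq_zero.1 this with h | h
        · exact absurd h (by rw [heq]; positivity)
        · exact h
      have := h1 (v - ((inner ℝ x v + 1) / R ^ 2) • x) (Or.inr (by
        rw [inner_sub_right, inner_smul_right, real_inner_self_eq_norm_sq, heq,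
          div_mul_cancel₀ _ (by positivity)]
        linarith))
      simpa [hz] using this
  have h3 : ∀ v : E, fderivWithin ℝ f S x v = 0 := fun v =>
    le_antisymm (h2 v) (by have := h2 (-v); rw [map_neg] at this; linarith)
  -- second order condition
  have h4 : ∀ v : E, (‖x‖ < R ∨ inner ℝ x v < 0) → L v v ≤ 0 := by
    intro v hv
    obtain ⟨ε, hε, hin⟩ := aux_inward hxR hv
    refine aux_second (g := fun t : ℝ => f (x + t • v))
      (g' := fun t : ℝ => fderivWithin ℝ f S (x + t • v) v) hε ?_ ?_ ?_ ?_
    · exact fun t ht => aux_line hin (hD _ (hin t ht))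
    · have := aux_line (f := fun y => fderivWithin ℝ f S y v) (L := L.flip v) (t := 0) hin
        (by simpa using hHess v)
      simpa using this
    · simpa using h3 v
    · intro t ht
      simpa using hmax _ (hin t ht)
  have h5 : ∀ v : E, inner ℝ x v ≤ 0 → L v v ≤ 0 := by
    intro v hv
    rcases hxR.lt_or_eq with hlt | heq
    · exact h4 v (Or.inl hlt)
    · have hcont : Continuous fun c : ℝ => L (v - c • x) (v - c • x) := by fun_prop
      have ht : Filter.Tendsto (fun c : ℝ => L (v - c • x) (v - c • x))
          (nhdsWithin 0 (Ioi 0)) (nhds (L v v)) := by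
        have := hcont.tendsto 0
        simp only [zero_smul, sub_zero] at this
        exact this.mono_left nhdsWithin_le_nhds
      refine le_of_tendsto ht ?_
      filter_upwards [self_mem_nhdsWithin] with c hc
      refine h4 _ (Or.inr ?_)
      rw [inner_sub_right, inner_smul_right, real_inner_self_eq_norm_sq, heq]
      have : 0 < c * R ^ 2 := mul_pos hc (by positivity)
      linarith
  have h6 : ∀ v : E, L v v ≤ 0 := by
    intro v
    rcases le_total (inner ℝ x v) 0 with h | h
    · exact h5 v h
    · have := h5 (-v) (by rw [inner_neg_right]; linarith)
      simpa using this
  unfold lapWithin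
  refine Finset.sum_nonpos fun i _ => ?_
  rw [(hHess _).fderivWithin (hS x hx)]
  exact h6 _

lemma aux_max {R : ℝ} (hR : 0 < R) {s : ℝ} (hs : 0 < s) {f : E → ℝ}
    (hf : ContDiffOn ℝ (⊤ : ℕ∞) f (closedBall 0 R))
    (hbd : ∀ x : E, ‖x‖ = R → fderivWithin ℝ f (closedBall 0 R) x (‖x‖⁻¹ • x) = 0)
    (heq : ∀ x ∈ closedBall (0 : E) R, lapWithin (closedBall 0 R) f x = s * f x) :
    ∀ x ∈ closedBall (0 : E) R, f x ≤ 0 := by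
  obtain ⟨x, hx, hmax⟩ := (isCompact_closedBall (0 : E) R).exists_isMaxOn
    ⟨0, by simpa using hR.le⟩ hf.continuousOn
  have h := aux_lap_nonpos hR hf hbd hx hmax
  rw [heq x hx] at h
  intro y hy
  have h1 : f y ≤ f x := hmax hy
  by_contra hc
  push Not at hc
  nlinarith [mul_pos hs (hc.trans_le h1)]

lemma aux_zero {R : ℝ} (hR : 0 < R) {s : ℝ} (hs : 0 < s) {f : E → ℝ}
    (hf : ContDiffOn ℝ (⊤ : ℕ∞) f (closedBall 0 R))
    (hbd : ∀ x : E, ‖x‖ = R → fderivWithin ℝ f (closedBall 0 R) x (‖x‖⁻¹ • x) = 0)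
    (heq : ∀ x ∈ closedBall (0 : E) R, lapWithin (closedBall 0 R) f x = s * f x) :
    ∀ x ∈ closedBall (0 : E) R, f x = 0 := by
  intro x hx
  have hS := aux_unique (n := n) hR
  refine le_antisymm (aux_max hR hs hf hbd heq x hx) ?_
  have := aux_max (f := fun y => (-1) * f y + 0 * f y) hR hs
    ((contDiffOn_const.mul hf).add (contDiffOn_const.mul hf)) ?_ ?_ x hx
  · linarith
  · intro y hy
    rw [aux_fd_lin hS (aux_diff hf) (aux_diff hf) _ _ (by simp [hy]), hbd y hy]
    ring
  · intro y hy
    rw [aux_lap_lin hS hf hf _ _ hy, heq y hy]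
    ring

end Helpers

/-- **First Neumann eigenfunctions of `Δ` on a ball are first Neumann eigenfunctions of `Δ²`.**
If `u` is a nonzero function, smooth on the closed ball `B_R(0) ⊂ ℝⁿ` (`n ≥ 2`, `R > 0`), with
`Δu = −μ₁(B_R(0))·u` in the ball and `∂u/∂n = 0` on the sphere, then `Δ²u = Υ₁(B_R(0))·u` in the
ball together with `∂u/∂n = ∂(Δu)/∂n = 0` on the sphere. -/
theorem first_lap_eigenfunction_is_biharmonic_eigenfunction {n : ℕ} (hn : 2 ≤ n)
    (R : ℝ) (hR : 0 < R) (μ₁ Υ₁ : ℝ)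
    (hμ : IsLeast {μ : ℝ | 0 < μ ∧ IsLapNeumannEigenvalueBall n R μ} μ₁)
    (hΥ : IsLeast {Υ : ℝ | 0 < Υ ∧ IsBiLapNeumannEigenvalueBall n R Υ} Υ₁)
    (u : EuclideanSpace ℝ (Fin n) → ℝ)
    (hu_smooth : ContDiffOn ℝ (⊤ : ℕ∞) u (closedBall 0 R))
    (hu_ne : ∃ x ∈ closedBall (0 : EuclideanSpace ℝ (Fin n)) R, u x ≠ 0)
    (hu_eig : ∀ x ∈ ball (0 : EuclideanSpace ℝ (Fin n)) R,
      lapWithin (closedBall 0 R) u x = -μ₁ * u x)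
    (hu_bd : ∀ x : EuclideanSpace ℝ (Fin n), ‖x‖ = R →
      fderivWithin ℝ u (closedBall 0 R) x (‖x‖⁻¹ • x) = 0) :
    (∀ x ∈ ball (0 : EuclideanSpace ℝ (Fin n)) R,
      lapWithin (closedBall 0 R) (lapWithin (closedBall 0 R) u) x = Υ₁ * u x) ∧
    (∀ x : EuclideanSpace ℝ (Fin n), ‖x‖ = R →
      fderivWithin ℝ u (closedBall 0 R) x (‖x‖⁻¹ • x) = 0) ∧
    (∀ x : EuclideanSpace ℝ (Fin n), ‖x‖ = R →
      fderivWithin ℝ (lapWithin (closedBall 0 R) u) (closedBall 0 R) x (‖x‖⁻¹ • x) = 0) := by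
  have hS := aux_unique (n := n) hR
  have hsub : ball (0 : EuclideanSpace ℝ (Fin n)) R ⊆ closedBall 0 R := ball_subset_closedBall
  have hμpos : 0 < μ₁ := hμ.1.1
  -- the eigenvalue equation up to the boundary
  have hext : EqOn (lapWithin (closedBall 0 R) u) (fun x => (-μ₁) * u x + 0 * u x)
      (closedBall 0 R) := by
    refine aux_extend hR (aux_lap_smooth hS hu_smooth).continuousOn
      ((contDiffOn_const.mul hu_smooth).add (contDiffOn_const.mul hu_smooth)).continuousOn ?_
    intro x hx
    rw [hu_eig x hx]; ring
  have hbi : ∀ x ∈ ball (0 : EuclideanSpace ℝ (Fin n)) R,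
      lapWithin (closedBall 0 R) (lapWithin (closedBall 0 R) u) x = μ₁ ^ 2 * u x := by
    intro x hx
    rw [aux_lap_congr hext (hsub hx), aux_lap_lin hS hu_smooth hu_smooth _ _ (hsub hx),
      hu_eig x hx]
    ring
  have hbd2 : ∀ x : EuclideanSpace ℝ (Fin n), ‖x‖ = R →
      fderivWithin ℝ (lapWithin (closedBall 0 R) u) (closedBall 0 R) x (‖x‖⁻¹ • x) = 0 := by
    intro x hx
    have hxS : x ∈ closedBall (0 : EuclideanSpace ℝ (Fin n)) R := by simp [hx]
    rw [fderivWithin_congr hext (hext hxS),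
      aux_fd_lin hS (aux_diff hu_smooth) (aux_diff hu_smooth) _ _ hxS, hu_bd x hx]
    ring
  have hle : Υ₁ ≤ μ₁ ^ 2 :=
    hΥ.2 ⟨by positivity, u, hu_smooth, hu_ne, hbi, hu_bd, hbd2⟩
  have hge : μ₁ ^ 2 ≤ Υ₁ := by
    obtain ⟨hΥpos, v, hv, hvne, hveq, hvbd, hvbd2⟩ := hΥ.1
    set s := Real.sqrt Υ₁ with hs
    have hspos : 0 < s := Real.sqrt_pos.2 hΥpos
    have hss : s * s = Υ₁ := Real.mul_self_sqrt hΥpos.le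
    have hlv := aux_lap_smooth hS hv
    have hwsm : ContDiffOn ℝ (⊤ : ℕ∞)
        (fun y => 1 * lapWithin (closedBall 0 R) v y + s * v y) (closedBall 0 R) :=
      (contDiffOn_const.mul hlv).add (contDiffOn_const.mul hv)
    have hz := aux_zero hR hspos hwsm ?_ ?_
    · have := hμ.2 (show s ∈ _ from ⟨hspos, v, hv, hvne, fun x hx => by
        have := hz x (hsub hx)
        linarith, hvbd⟩)
      nlinarith
    · intro x hx
      rw [aux_fd_lin hS (aux_diff hlv) (aux_diff hv) _ _ (by simp [hx]), hvbd x hx, hvbd2 x hx]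
      ring
    · refine aux_extend hR (aux_lap_smooth hS hwsm).continuousOn
        (contDiffOn_const.mul hwsm).continuousOn ?_
      intro x hx
      rw [aux_lap_lin hS hlv hv _ _ (hsub hx), hveq x hx, ← hss]
      ring
  have heq : Υ₁ = μ₁ ^ 2 := le_antisymm hle hge
  exact ⟨fun x hx => by rw [heq]; exact hbi x hx, hu_bd, hbd2⟩
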